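/- Let n ≥ 1 be a natural number and let a ∈ L_T satisfy λ̃_{2n−1} ≺ a and ∫_0^T |a(x)| dx ≤ T·λ̃_{2n−1} + (2π(2n−1)(2n+1)/T)·cot((2n−1)π/(2(2n+1))). Then the antiperiodic problem u'' + a(x)u = 0 on (0,T), u(0) + u(T) = 0, u'(0) + u'(T) = 0, has only the trivial solution u ≡ 0. -/

import Mathlib

open MeasureTheory Set Real

/-- `u` is a solution of `u'' + a·u = 0` on `[c,d]`, with derivative function `v`. -/
def IsSolOn (a u v : ℝ → ℝ) (c d : ℝ) : Prop :=
  (∀ x ∈ Set.Icc c d, HasDerivWithinAt u (v x) (Set.Icc c d) x) ∧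
  (∀ x ∈ Set.Icc c d, v x = v c - ∫ t in c..x, a t * u t)

/-- Membership in `L_T`: measurable, `T`-periodic and integrable on `[0,T]`. -/
def MemLT (T : ℝ) (a : ℝ → ℝ) : Prop :=
  Measurable a ∧ (∀ x, a (x + T) = a x) ∧ IntegrableOn a (Set.Icc 0 T)

/-- `c ≺ d` : `c ≤ d` a.e. on `[0,T]` and `c < d` on a set of positive measure. -/
def Prec (T : ℝ) (c d : ℝ → ℝ) : Prop :=
  (∀ᵐ x ∂(volume.restrict (Set.Icc 0 T)), c x ≤ d x) ∧
  0 < volume {x ∈ Set.Icc 0 T | c x < d x}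

/-- `(u,v)` solves the periodic problem `u'' + a u = 0`, `u(0)=u(T)`, `u'(0)=u'(T)`. -/
def PeriodicSol (T : ℝ) (a u v : ℝ → ℝ) : Prop :=
  IsSolOn a u v 0 T ∧ u 0 = u T ∧ v 0 = v T

/-- `(u,v)` solves the antiperiodic problem `u'' + a u = 0`, `u(0)+u(T)=0`, `u'(0)+u'(T)=0`. -/
def AntiperiodicSol (T : ℝ) (a u v : ℝ → ℝ) : Prop :=
  IsSolOn a u v 0 T ∧ u 0 + u T = 0 ∧ v 0 + v T = 0

/-- The `(2n-1)`-st periodic eigenvalue `λ_{2n-1} = 4 n² π² / T²`. -/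
noncomputable def lam (T : ℝ) (n : ℕ) : ℝ := 4 * (n : ℝ) ^ 2 * Real.pi ^ 2 / T ^ 2

/-- The `(2n-1)`-st antiperiodic eigenvalue `λ̃_{2n-1} = (2n-1)² π² / T²`. -/
noncomputable def lamT (T : ℝ) (n : ℕ) : ℝ := (2 * (n : ℝ) - 1) ^ 2 * Real.pi ^ 2 / T ^ 2

/-- The set `Λ_n`. -/
def LambdaN (T : ℝ) (n : ℕ) : Set (ℝ → ℝ) :=
  {a | MemLT T a ∧ Prec T (fun _ => lam T n) a ∧
    ∃ u v : ℝ → ℝ, PeriodicSol T a u v ∧ ∃ x ∈ Set.Icc 0 T, u x ≠ 0}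

/-- The set `Λ̃_n`. -/
def LambdaTildeN (T : ℝ) (n : ℕ) : Set (ℝ → ℝ) :=
  {a | MemLT T a ∧ Prec T (fun _ => lamT T n) a ∧
    ∃ u v : ℝ → ℝ, AntiperiodicSol T a u v ∧ ∃ x ∈ Set.Icc 0 T, u x ≠ 0}

/-- The constant `β_{1,n}` of the periodic `L¹` Lyapunov inequality. -/
noncomputable def beta1 (T : ℝ) (n : ℕ) : ℝ :=
  8 * Real.pi * (n : ℝ) * ((n : ℝ) + 1) / T * Real.cot ((n : ℝ) * Real.pi / (2 * ((n : ℝ) + 1)))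

/-- The constant `β̃_{1,n}` of the antiperiodic `L¹` Lyapunov inequality. -/
noncomputable def betaT1 (T : ℝ) (n : ℕ) : ℝ :=
  2 * Real.pi * (2 * (n : ℝ) - 1) * (2 * (n : ℝ) + 1) / T *
    Real.cot ((2 * (n : ℝ) - 1) * Real.pi / (2 * (2 * (n : ℝ) + 1)))

/-!
For a nontrivial solution `u` put `ω = mπ / T` and `b = (a - ω²) / ω`. The phase point `u' + iωu`
never vanishes, and its argument `θ` satisfies `θ' = ω + b sin²θ`. Since `b ≥ 0` is not a.e. zero,
`θ` increases by more than `ωT = mπ` over `[0, T]`; periodicity (`m` even) or antiperiodicity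
(`m` odd) makes the increment `mπ` plus a multiple of `2π`, so it is at least `(m + 2)π`.

To see what this costs in terms of `∫ b`, multiply the equation by `W(θ) = 1 / max (sin²θ, sin²α)`
and integrate. The left side is at least `(m + 2) ∫₀^π W = 2(m + 2)(α / sin²α + cot α)`, and the
right side is less than `mπ / sin²α + ∫ b`. The choice `α = mπ / (2(m + 2))` cancels the terms in
`1 / sin²α` and leaves `∫ b > 2(m + 2) cot α`, which contradicts the bound on `∫ a`.
-/

/-! ### Absolutely continuous functions -/

section AbsolutelyContinuous

variable {E F X Y : Type*} [NormedAddCommGroup E] [NormedSpace ℝ E] [NormedAddCommGroup F]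
  [NormedSpace ℝ F] [PseudoMetricSpace X] [PseudoMetricSpace Y] {a b : ℝ}

lemma absolutelyContinuousOnInterval_of_dist_le_mul {f : ℝ → X} {g : ℝ → Y} (K : ℝ)
    (hg : AbsolutelyContinuousOnInterval g a b)
    (h : ∀ x ∈ uIcc a b, ∀ y ∈ uIcc a b, dist (f x) (f y) ≤ K * dist (g x) (g y)) :
    AbsolutelyContinuousOnInterval f a b := by
  unfold AbsolutelyContinuousOnInterval at hg ⊢
  have hKg := hg.const_mul K
  rw [mul_zero] at hKg
  refine squeeze_zero' (.of_forall fun _ ↦ Finset.sum_nonneg fun _ _ ↦ dist_nonneg) ?_ hKg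
  filter_upwards [Filter.mem_inf_of_right (Filter.mem_principal_self _)] with I hI
  rw [Finset.mul_sum]
  exact Finset.sum_le_sum fun i hi ↦ h _ (hI.1 i hi).1 _ (hI.1 i hi).2

/-- `f` is absolutely continuous on `[[a, b]]` with almost everywhere derivative `f'`. The
derivative is part of the data so that explicit formulas for it can be stated and rewritten; it is
only determined up to a null set. -/
structure HasACDeriv (f f' : ℝ → E) (a b : ℝ) : Prop where
  absolutelyContinuous : AbsolutelyContinuousOnInterval f a b
  ae_hasDerivAt : ∀ᵐ x ∂volume.restrict (uIcc a b), HasDerivAt f (f' x) x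

namespace HasACDeriv

variable {f f' g g' : ℝ → E}

lemma of_eq_add_integral [CompleteSpace E] (hf' : IntervalIntegrable f' volume a b)
    (h : ∀ x ∈ uIcc a b, f x = f a + ∫ t in a..x, f' t) : HasACDeriv f f' a b where
  absolutelyContinuous := by
    refine absolutelyContinuousOnInterval_of_dist_le_mul 1
      (hf'.norm.absolutelyContinuousOnInterval_intervalIntegral left_mem_uIcc) fun x hx y hy ↦ ?_
    have hax : IntervalIntegrable f' volume a x := hf'.mono_set (uIcc_subset_uIcc_left hx)
    have hay : IntervalIntegrable f' volume a y := hf'.mono_set (uIcc_subset_uIcc_left hy)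
    rw [h x hx, h y hy, dist_add_left, dist_eq_norm, Real.dist_eq, one_mul,
      intervalIntegral.integral_interval_sub_left hax hay,
      intervalIntegral.integral_interval_sub_left hax.norm hay.norm]
    exact intervalIntegral.norm_integral_le_abs_integral_norm
  ae_hasDerivAt := by
    rw [uIcc, ← restrict_Ioo_eq_restrict_Icc]
    filter_upwards [ae_restrict_of_ae hf'.ae_hasDerivAt_integral,
      ae_restrict_mem measurableSet_Ioo] with x hderiv hx
    refine ((hderiv (Ioo_subset_Icc_self hx) a left_mem_uIcc).const_add (f a)).congr_of_eventuallyEq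
      ?_
    filter_upwards [Icc_mem_nhds hx.1 hx.2] with y hy using h y hy

lemma congr_deriv (hf : HasACDeriv f f' a b) (h : ∀ x ∈ uIcc a b, f' x = g' x) :
    HasACDeriv f g' a b where
  absolutelyContinuous := hf.absolutelyContinuous
  ae_hasDerivAt := by
    filter_upwards [hf.ae_hasDerivAt, ae_restrict_mem measurableSet_uIcc] with x hx hmem
    exact h x hmem ▸ hx

lemma continuousOn (hf : HasACDeriv f f' a b) : ContinuousOn f (uIcc a b) :=
  hf.absolutelyContinuous.continuousOn

lemma mono {c d : ℝ} (hf : HasACDeriv f f' a b) (h : uIcc c d ⊆ uIcc a b) :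
    HasACDeriv f f' c d where
  absolutelyContinuous := hf.absolutelyContinuous.mono h
  ae_hasDerivAt := ae_restrict_of_ae_restrict_of_subset h hf.ae_hasDerivAt

lemma add (hf : HasACDeriv f f' a b) (hg : HasACDeriv g g' a b) :
    HasACDeriv (fun x ↦ f x + g x) (fun x ↦ f' x + g' x) a b where
  absolutelyContinuous := hf.absolutelyContinuous.fun_add hg.absolutelyContinuous
  ae_hasDerivAt := by
    filter_upwards [hf.ae_hasDerivAt, hg.ae_hasDerivAt] with x hfx hgx using hfx.add hgx

lemma mul {𝕜 : Type*} [NormedField 𝕜] [NormedAlgebra ℝ 𝕜] {f f' g g' : ℝ → 𝕜}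
    (hf : HasACDeriv f f' a b) (hg : HasACDeriv g g' a b) :
    HasACDeriv (fun x ↦ f x * g x) (fun x ↦ f' x * g x + f x * g' x) a b where
  absolutelyContinuous := hf.absolutelyContinuous.fun_smul hg.absolutelyContinuous
  ae_hasDerivAt := by
    filter_upwards [hf.ae_hasDerivAt, hg.ae_hasDerivAt] with x hfx hgx using hfx.mul hgx

lemma comp {φ : E → F} (hφ : ContDiff ℝ 1 φ) (hf : HasACDeriv f f' a b) :
    HasACDeriv (fun x ↦ φ (f x)) (fun x ↦ fderiv ℝ φ (f x) (f' x)) a b where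
  absolutelyContinuous := by
    obtain ⟨K, hK⟩ := (hφ.locallyLipschitz.locallyLipschitzOn).exists_lipschitzOnWith_of_compact
      (isCompact_uIcc.image_of_continuousOn hf.continuousOn)
    exact absolutelyContinuousOnInterval_of_dist_le_mul K hf.absolutelyContinuous fun x hx y hy ↦
      hK.dist_le_mul _ (mem_image_of_mem f hx) _ (mem_image_of_mem f hy)
  ae_hasDerivAt := by
    filter_upwards [hf.ae_hasDerivAt] with x hx
    exact (hφ.differentiable one_ne_zero (f x)).hasFDerivAt.comp_hasDerivAt x hx

lemma clm_comp (L : E →L[ℝ] F) (hf : HasACDeriv f f' a b) :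
    HasACDeriv (fun x ↦ L (f x)) (fun x ↦ L (f' x)) a b := by
  simpa only [L.fderiv] using hf.comp L.contDiff

end HasACDeriv

end AbsolutelyContinuous

namespace HasACDeriv

section Real

variable {f f' : ℝ → ℝ} {a b : ℝ}

lemma intervalIntegrable (hf : HasACDeriv f f' a b) : IntervalIntegrable f' volume a b := by
  refine hf.absolutelyContinuous.intervalIntegrable_deriv.congr_ae ?_
  filter_upwards [ae_restrict_of_ae_restrict_of_subset uIoc_subset_uIcc hf.ae_hasDerivAt]
    with x hx using hx.deriv

lemma integral_eq_sub (hf : HasACDeriv f f' a b) : ∫ x in a..b, f' x = f b - f a := by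
  rw [← hf.absolutelyContinuous.integral_deriv_eq_sub]
  refine intervalIntegral.integral_congr_ae_restrict ?_
  filter_upwards [ae_restrict_of_ae_restrict_of_subset uIoc_subset_uIcc hf.ae_hasDerivAt]
    with x hx using hx.deriv.symm

lemma mul_sub_lt_sub {C : ℝ} (hab : a ≤ b) (hf : HasACDeriv f f' a b)
    (hle : ∀ᵐ x ∂volume.restrict (Icc a b), C ≤ f' x)
    (hlt : ∃ᵐ x ∂volume.restrict (Icc a b), C < f' x) : C * (b - a) < f b - f a := by
  rw [← restrict_Ioc_eq_restrict_Icc] at hle hlt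
  have hint := intervalIntegral.integral_lt_integral_of_ae_le_of_measure_setOfPred_lt_ne_zero hab
    intervalIntegrable_const hf.intervalIntegrable hle (frequently_ae_iff.1 hlt)
  rwa [intervalIntegral.integral_const, smul_eq_mul, mul_comm, hf.integral_eq_sub] at hint

lemma strictMonoOn (hf : HasACDeriv f f' a b)
    (hpos : ∀ᵐ x ∂volume.restrict (Icc a b), 0 < f' x) : StrictMonoOn f (Icc a b) := by
  intro x hx y hy hxy
  have hsub : Icc x y ⊆ Icc a b := Icc_subset_Icc hx.1 hy.2
  have hpos_xy := ae_restrict_of_ae_restrict_of_subset hsub hpos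
  have : (ae (volume.restrict (Icc x y))).NeBot := ae_restrict_neBot.2 (by simpa using hxy)
  have hfxy : HasACDeriv f f' x y :=
    hf.mono <| (uIcc_of_le hxy.le).trans_subset (hsub.trans Icc_subset_uIcc)
  simpa using hfxy.mul_sub_lt_sub hxy.le (hpos_xy.mono fun _ ↦ le_of_lt) hpos_xy.frequently

lemma comp_primitive {g : ℝ → ℝ} (hg : Continuous g) (hf : HasACDeriv f f' a b) (c : ℝ) :
    HasACDeriv (fun x ↦ ∫ y in c..f x, g y) (fun x ↦ g (f x) * f' x) a b := by
  have hderiv (y : ℝ) : HasDerivAt (fun y ↦ ∫ t in c..y, g t) (g y) y :=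
    hg.integral_hasStrictDerivAt c y |>.hasDerivAt
  have hC1 : ContDiff ℝ 1 (fun y ↦ ∫ t in c..y, g t) := contDiff_one_iff_deriv.2
    ⟨fun y ↦ (hderiv y).differentiableAt, by simpa only [funext fun y ↦ (hderiv y).deriv] using hg⟩
  refine (hf.comp hC1).congr_deriv fun x _ ↦ ?_
  rw [(hderiv (f x)).hasFDerivAt.fderiv]
  simp [mul_comm]

lemma integral_comp_mul_deriv {g : ℝ → ℝ} (hg : Continuous g) (hf : HasACDeriv f f' a b) :
    ∫ x in a..b, g (f x) * f' x = ∫ y in f a..f b, g y := by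
  rw [(hf.comp_primitive hg (f a)).integral_eq_sub, intervalIntegral.integral_same, sub_zero]

end Real

section Complex

variable {z q : ℝ → ℂ} {a b : ℝ}

lemma eq_mul_exp_integral (hq : IntervalIntegrable q volume a b)
    (hz : HasACDeriv z (fun x ↦ q x * z x) a b) {x : ℝ} (hx : x ∈ uIcc a b) :
    z x = z a * Complex.exp (∫ t in a..x, q t) := by
  have hQ : HasACDeriv (fun x ↦ ∫ t in a..x, -q t) (fun x ↦ -q x) a b :=
    of_eq_add_integral hq.neg fun x _ ↦ by simp
  have hw := (hz.mul (hQ.comp Complex.contDiff_exp)).congr_deriv (g' := fun _ ↦ 0) fun x _ ↦ by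
    rw [((Complex.hasDerivAt_exp _).hasFDerivAt.restrictScalars ℝ).fderiv]
    simp only [intervalIntegral.integral_neg, ContinuousLinearMap.coe_restrictScalars',
      ContinuousLinearMap.toSpanSingleton_apply, smul_eq_mul, neg_mul, mul_neg]
    ring
  obtain ⟨C, hC⟩ := hw.absolutelyContinuous.const_of_ae_hasDerivAt_zero
    ((ae_restrict_iff' measurableSet_uIcc).1 hw.ae_hasDerivAt)
  have hxa := (hC x hx).trans (hC a left_mem_uIcc).symm
  simp only [intervalIntegral.integral_neg, intervalIntegral.integral_same, Complex.exp_zero,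
    mul_one] at hxa
  rw [← hxa, mul_assoc, ← Complex.exp_add, neg_add_cancel, Complex.exp_zero, mul_one]

lemma exists_eq_exp (hq : IntervalIntegrable q volume a b)
    (hz : HasACDeriv z (fun x ↦ q x * z x) a b) (hne : ∃ x ∈ uIcc a b, z x ≠ 0) :
    ∃ L : ℝ → ℂ, HasACDeriv L q a b ∧ ∀ x ∈ uIcc a b, z x = Complex.exp (L x) := by
  obtain ⟨x₀, hx₀, hzx₀⟩ := hne
  have hza : z a ≠ 0 := left_ne_zero_of_mul (hz.eq_mul_exp_integral hq hx₀ ▸ hzx₀)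
  refine ⟨fun x ↦ Complex.log (z a) + ∫ t in a..x, q t,
    of_eq_add_integral hq fun x _ ↦ by simp, fun x hx ↦ ?_⟩
  rw [Complex.exp_add, Complex.exp_log hza, hz.eq_mul_exp_integral hq hx]

end Complex

end HasACDeriv

/-! ### The Prüfer angle -/

namespace IsSolOn

variable {a u v : ℝ → ℝ} {c d : ℝ}

lemma continuousOn (hsol : IsSolOn a u v c d) : ContinuousOn u (Icc c d) :=
  fun x hx ↦ (hsol.1 x hx).continuousWithinAt

lemma hasACDeriv_deriv (hsol : IsSolOn a u v c d) (hcd : c ≤ d)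
    (ha : IntervalIntegrable a volume c d) : HasACDeriv v (fun x ↦ -(a x * u x)) c d := by
  refine .of_eq_add_integral (ha.mul_continuousOn ?_).neg fun x hx ↦ ?_
  · rw [uIcc_of_le hcd]
    exact hsol.continuousOn
  · rw [hsol.2 x (uIcc_of_le hcd ▸ hx), intervalIntegral.integral_neg, sub_eq_add_neg]

lemma hasACDeriv (hsol : IsSolOn a u v c d) (hcd : c ≤ d)
    (ha : IntervalIntegrable a volume c d) : HasACDeriv u v c d := by
  have hv : ContinuousOn v (uIcc c d) := (hsol.hasACDeriv_deriv hcd ha).continuousOn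
  refine .of_eq_add_integral hv.intervalIntegrable fun x hx ↦ ?_
  rw [intervalIntegral.integral_eq_sub_of_hasDerivAt_of_le (a := c) (b := x), add_sub_cancel]
  all_goals rw [uIcc_of_le hcd] at hx
  · exact hx.1
  · exact hsol.continuousOn.mono (Icc_subset_Icc_right hx.2)
  · exact fun t ht ↦ (hsol.1 t ⟨ht.1.le, ht.2.le.trans hx.2⟩).hasDerivAt
      (Icc_mem_nhds ht.1 (ht.2.trans_le hx.2))
  · exact hv.mono (uIcc_subset_uIcc_left (uIcc_of_le hcd ▸ hx)) |>.intervalIntegrable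

end IsSolOn

/-- The phase point `v + iωu` of a function `u` with derivative `v`. For `u'' + ω²u = 0` it rotates
about `0` at constant angular speed `ω`; in general its argument is the Prüfer angle of `u`. -/
noncomputable def phasePoint (ω : ℝ) (u v : ℝ → ℝ) (x : ℝ) : ℂ := ⟨v x, ω * u x⟩

lemma phasePoint_eq_mul {ω r x y : ℝ} {u v : ℝ → ℝ} (hu : u y = r * u x) (hv : v y = r * v x) :
    phasePoint ω u v y = r * phasePoint ω u v x := by
  apply Complex.ext <;> simp [phasePoint, hu, hv, mul_left_comm]

/-- `θ` solves the Prüfer equation `θ' = ω + b sin²θ` on `[[c, d]]`. For a solution `u` of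
`u'' + (ω² + ωb)u = 0` this is the equation of the argument of the phase point `u' + iωu`. -/
def IsPruferAngle (ω : ℝ) (b θ : ℝ → ℝ) (c d : ℝ) : Prop :=
  HasACDeriv θ (fun x ↦ ω + b x * sin (θ x) ^ 2) c d

lemma exp_im_div_exp_im (w : ℂ) :
    (((Complex.exp w).im : ℂ) / Complex.exp w).im = -sin w.im ^ 2 := by
  have hexp : Real.exp w.re ≠ 0 := (Real.exp_pos _).ne'
  rw [Complex.div_im, Complex.normSq_eq_norm_sq, Complex.norm_exp, Complex.ofReal_re,
    Complex.ofReal_im, Complex.exp_im]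
  field_simp
  ring

lemma norm_im_div_le_one (z : ℂ) : ‖(z.im : ℂ) / z‖ ≤ 1 := by
  rw [norm_div, Complex.norm_real, Real.norm_eq_abs]
  exact div_le_one_of_le₀ (Complex.abs_im_le_norm z) (norm_nonneg z)

section Existence

variable {ω c d : ℝ} {a b u v : ℝ → ℝ} {z : ℝ → ℂ}

lemma HasACDeriv.exists_prufer_angle (hb : IntervalIntegrable b volume c d)
    (hz : HasACDeriv z (fun x ↦ ω * Complex.I * z x - b x * (z x).im) c d)
    (hne : ∃ x ∈ uIcc c d, z x ≠ 0) :
    ∃ L : ℝ → ℂ, (∀ x ∈ uIcc c d, z x = Complex.exp (L x)) ∧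
      IsPruferAngle ω b (fun x ↦ (L x).im) c d := by
  have hmeas : AEStronglyMeasurable (fun x ↦ ((z x).im : ℂ) / z x)
      (volume.restrict (uIoc c d)) := by
    have hzm : AEMeasurable z (volume.restrict (uIoc c d)) :=
      (hz.continuousOn.mono uIoc_subset_uIcc).aemeasurable measurableSet_uIoc
    exact ((Complex.measurable_ofReal.comp_aemeasurable
      (Complex.measurable_im.comp_aemeasurable hzm)).div hzm).aestronglyMeasurable
  have hratio : IntervalIntegrable (fun x ↦ (b x : ℂ) * ((z x).im / z x)) volume c d := by
    rw [intervalIntegrable_iff] at hb ⊢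
    exact hb.ofReal.mul_bdd hmeas (.of_forall fun x ↦ norm_im_div_le_one (z x))
  -- At a zero of `z` the quotient is `0 / 0 = 0`, so the linear equation still holds there.
  have hlin : HasACDeriv z
      (fun x ↦ (ω * Complex.I - b x * ((z x).im / z x)) * z x) c d :=
    hz.congr_deriv fun x _ ↦ by
      rw [sub_mul, mul_assoc (b x : ℂ), div_mul_cancel_of_imp fun h ↦ by simp [h]]
  obtain ⟨L, hL, hexp⟩ := hlin.exists_eq_exp (intervalIntegrable_const.sub hratio) hne
  refine ⟨L, hexp, (hL.clm_comp Complex.imCLM).congr_deriv fun x hx ↦ ?_⟩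
  rw [hexp x hx, Complex.imCLM_apply, Complex.sub_im, Complex.im_ofReal_mul, Complex.im_ofReal_mul,
    exp_im_div_exp_im, Complex.I_im]
  ring

namespace IsSolOn

lemma hasACDeriv_phasePoint (hω : ω ≠ 0) (hcd : c ≤ d) (ha : IntervalIntegrable a volume c d)
    (hsol : IsSolOn a u v c d) :
    HasACDeriv (phasePoint ω u v) (fun x ↦ ω * Complex.I * phasePoint ω u v x -
      ((a x - ω ^ 2) / ω : ℝ) * (phasePoint ω u v x).im) c d := by
  have hz := ((hsol.hasACDeriv_deriv hcd ha).clm_comp Complex.ofRealCLM).add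
    ((hsol.hasACDeriv hcd ha).clm_comp (.toSpanSingleton ℝ (ω * Complex.I)))
  convert hz.congr_deriv fun x _ ↦ ?_ using 1
  · exact funext fun x ↦ by apply Complex.ext <;> simp [phasePoint, mul_comm]
  · have hrate : (a x - ω ^ 2) / ω * ω = a x - ω ^ 2 := div_mul_cancel₀ _ hω
    generalize (a x - ω ^ 2) / ω = r at hrate ⊢
    apply Complex.ext
    · simp only [phasePoint, Complex.ofRealCLM_apply, ContinuousLinearMap.toSpanSingleton_apply,
        Complex.real_smul, Complex.add_re, Complex.sub_re, Complex.mul_re, Complex.mul_im,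
        Complex.ofReal_re, Complex.ofReal_im, Complex.I_re, Complex.I_im]
      linear_combination u x * hrate
    · simp [phasePoint, mul_comm]

lemma exists_prufer_angle (hω : ω ≠ 0) (hcd : c ≤ d) (ha : IntervalIntegrable a volume c d)
    (hsol : IsSolOn a u v c d) (hne : ∃ x ∈ Icc c d, u x ≠ 0) :
    ∃ L : ℝ → ℂ, (∀ x ∈ Icc c d, phasePoint ω u v x = Complex.exp (L x)) ∧
      IsPruferAngle ω (fun x ↦ (a x - ω ^ 2) / ω) (fun x ↦ (L x).im) c d := by
  have hne_phase : ∃ x ∈ Icc c d, phasePoint ω u v x ≠ 0 :=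
    hne.imp fun x ⟨hx, hux⟩ ↦ ⟨hx, fun h ↦ mul_ne_zero hω hux (congr_arg Complex.im h)⟩
  rw [← uIcc_of_le hcd] at hne_phase ⊢
  exact (hsol.hasACDeriv_phasePoint hω hcd ha).exists_prufer_angle
    ((ha.sub intervalIntegrable_const).div_const ω) hne_phase

end IsSolOn

end Existence

/-! ### The comparison weight -/

lemma integral_inv_sin_sq {x y : ℝ} (hx : 0 < x) (hxy : x ≤ y) (hy : y < π) :
    ∫ t in x..y, (sin t ^ 2)⁻¹ = cot x - cot y := by
  have hsin : ∀ t ∈ uIcc x y, sin t ≠ 0 := fun t ht ↦ by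
    rw [uIcc_of_le hxy] at ht
    exact (sin_pos_of_pos_of_lt_pi (hx.trans_le ht.1) (ht.2.trans_lt hy)).ne'
  have hderiv : ∀ t ∈ uIcc x y, HasDerivAt (fun t ↦ -(cos t / sin t)) (sin t ^ 2)⁻¹ t :=
    fun t ht ↦ by
      refine ((hasDerivAt_cos t).div (hasDerivAt_sin t) (hsin t ht)).neg.congr_deriv ?_
      field_simp [hsin t ht]
      linarith [sin_sq_add_cos_sq t]
  rw [intervalIntegral.integral_eq_sub_of_hasDerivAt hderiv <|
    (ContinuousOn.inv₀ (by fun_prop) fun t ht ↦ pow_ne_zero 2 (hsin t ht)).intervalIntegrable,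
    cot_eq_cos_div_sin, cot_eq_cos_div_sin]
  ring

lemma nsmul_integral_le_integral_of_periodic {g : ℝ → ℝ} {p s t : ℝ} (hg : Function.Periodic g p)
    (hint : ∀ x y, IntervalIntegrable g volume x y) (hg₀ : ∀ x, 0 ≤ g x) (N : ℕ)
    (hst : s + N * p ≤ t) : N * ∫ x in (0 : ℝ)..p, g x ≤ ∫ x in s..t, g x := by
  have hperiods := hg.intervalIntegral_add_zsmul_eq N s hint
  rw [hg.intervalIntegral_add_eq s 0, zero_add, natCast_zsmul, natCast_zsmul, nsmul_eq_mul,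
    nsmul_eq_mul] at hperiods
  rw [← hperiods, ← intervalIntegral.integral_add_adjacent_intervals
    (hint s (s + N * p)) (hint (s + N * p) t)]
  exact le_add_of_nonneg_right (intervalIntegral.integral_nonneg hst fun x _ ↦ hg₀ x)

/-- The weight with which the Prüfer equation `θ' = ω + b sin²θ` is multiplied. It is the largest
function of `θ` whose product with `sin²θ` is at most `1` and which is itself at most `1 / sin²α`;
the parameter `α` balances the two bounds. -/
noncomputable def pruferWeight (α t : ℝ) : ℝ := (max (sin t ^ 2) (sin α ^ 2))⁻¹

section pruferWeight

variable {α : ℝ}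

lemma continuous_pruferWeight (hα : sin α ≠ 0) : Continuous (pruferWeight α) :=
  Continuous.inv₀ (by fun_prop) fun _ ↦ (lt_max_of_lt_right (by positivity)).ne'

lemma pruferWeight_nonneg (t : ℝ) : 0 ≤ pruferWeight α t :=
  inv_nonneg.2 (le_max_of_le_left (sq_nonneg _))

lemma pruferWeight_le (hα : sin α ≠ 0) (t : ℝ) : pruferWeight α t ≤ (sin α ^ 2)⁻¹ :=
  inv_anti₀ (by positivity) (le_max_right _ _)

lemma pruferWeight_mul_sin_sq_le_one (t : ℝ) : pruferWeight α t * sin t ^ 2 ≤ 1 := by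
  rw [pruferWeight, inv_mul_eq_div]
  exact div_le_one_of_le₀ (le_max_left _ _) (le_max_of_le_left (sq_nonneg _))

lemma pruferWeight_pi_div_two : pruferWeight α (π / 2) = 1 := by
  rw [pruferWeight, sin_pi_div_two, one_pow, max_eq_left (sin_sq_le_one α), inv_one]

lemma periodic_pruferWeight : Function.Periodic (pruferWeight α) π := fun t ↦ by
  simp only [pruferWeight, sin_add_pi, neg_sq]

lemma pruferWeight_pi_sub (t : ℝ) : pruferWeight α (π - t) = pruferWeight α t := by
  simp only [pruferWeight, sin_pi_sub]

lemma integral_pruferWeight (hα₀ : 0 < α) (hα : α ≤ π / 2) :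
    ∫ t in (0 : ℝ)..π, pruferWeight α t = 2 * (α * (sin α ^ 2)⁻¹ + cot α) := by
  have hsin : 0 < sin α := sin_pos_of_pos_of_lt_pi hα₀ (by linarith [pi_pos])
  have hint (x y : ℝ) : IntervalIntegrable (pruferWeight α) volume x y :=
    (continuous_pruferWeight hsin.ne').intervalIntegrable x y
  have hsymm : ∫ t in (π / 2)..π, pruferWeight α t = ∫ t in (0 : ℝ)..π / 2, pruferWeight α t := by
    have h := intervalIntegral.integral_comp_sub_left (pruferWeight α) (a := π / 2) (b := π) π
    rwa [sub_self, sub_half, intervalIntegral.integral_congr fun t _ ↦ pruferWeight_pi_sub t] at h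
  have hleft : ∫ t in (0 : ℝ)..α, pruferWeight α t = α * (sin α ^ 2)⁻¹ := by
    rw [intervalIntegral.integral_congr (g := fun _ ↦ (sin α ^ 2)⁻¹) fun t ht ↦ ?_,
      intervalIntegral.integral_const, sub_zero, smul_eq_mul]
    rw [uIcc_of_le hα₀.le] at ht
    have hsin_t : sin t ≤ sin α := sin_le_sin_of_le_of_le_pi_div_two (by linarith [ht.1]) hα ht.2
    have hsin_t₀ : 0 ≤ sin t := sin_nonneg_of_nonneg_of_le_pi ht.1 (by linarith [ht.2])
    simp only [pruferWeight, max_eq_right (pow_le_pow_left₀ hsin_t₀ hsin_t 2)]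
  have hright : ∫ t in α..π / 2, pruferWeight α t = cot α := by
    rw [intervalIntegral.integral_congr (g := fun t ↦ (sin t ^ 2)⁻¹) fun t ht ↦ ?_,
      integral_inv_sin_sq hα₀ hα (by linarith [pi_pos]), cot_eq_cos_div_sin (π / 2),
      cos_pi_div_two, zero_div, sub_zero]
    rw [uIcc_of_le hα] at ht
    have hsin_t : sin α ≤ sin t := sin_le_sin_of_le_of_le_pi_div_two (by linarith) ht.2 ht.1
    simp only [pruferWeight, max_eq_left (pow_le_pow_left₀ hsin.le hsin_t 2)]
  rw [← intervalIntegral.integral_add_adjacent_intervals (hint 0 (π / 2)) (hint (π / 2) π), hsymm,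
    ← intervalIntegral.integral_add_adjacent_intervals (hint 0 α) (hint α (π / 2)), hleft, hright]
  ring

lemma exists_pruferWeight_eq_one {θ : ℝ → ℝ} {c d : ℝ} (hcd : c ≤ d)
    (hθ : ContinuousOn θ (Icc c d)) (hturn : θ c + π ≤ θ d) :
    ∃ x ∈ Icc c d, pruferWeight α (θ x) = 1 := by
  obtain ⟨y, hy, hweight⟩ := periodic_pruferWeight.exists_mem_Ico pi_pos (π / 2) (θ c)
  obtain ⟨x, hx, rfl⟩ := intermediate_value_Icc hcd hθ ⟨hy.1, hy.2.le.trans hturn⟩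
  exact ⟨x, hx, hweight.symm.trans pruferWeight_pi_div_two⟩

lemma integral_pruferWeight_comp_lt {θ : ℝ → ℝ} {c d : ℝ} (hα : sin α ≠ 0)
    (hα_lt : sin α ^ 2 < 1) (hcd : c < d) (hθ : ContinuousOn θ (Icc c d))
    (hturn : θ c + π ≤ θ d) :
    ∫ x in c..d, pruferWeight α (θ x) < (d - c) * (sin α ^ 2)⁻¹ := by
  rw [← smul_eq_mul, ← intervalIntegral.integral_const]
  obtain ⟨x, hx, hone⟩ := exists_pruferWeight_eq_one hcd.le hθ hturn
  exact intervalIntegral.integral_lt_integral_of_continuousOn_of_le_of_exists_lt hcd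
    ((continuous_pruferWeight hα).comp_continuousOn hθ) continuousOn_const
    (fun x _ ↦ pruferWeight_le hα (θ x))
    ⟨x, hx, hone.trans_lt ((one_lt_inv₀ (by positivity)).2 hα_lt)⟩

end pruferWeight

/-! ### Total increase of the Prüfer angle -/

lemma ae_sin_ne_zero_of_injOn {θ : ℝ → ℝ} {s : Set ℝ} (hs : MeasurableSet s) (hθ : InjOn θ s) :
    ∀ᵐ x ∂volume.restrict s, sin (θ x) ≠ 0 := by
  have hcountable : {x ∈ s | sin (θ x) = 0}.Countable := by
    refine MapsTo.countable_of_injOn (f := θ) (t := range fun n : ℤ ↦ n * π) (fun x hx ↦ ?_)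
      (hθ.mono fun x hx ↦ hx.1) (countable_range _)
    exact sin_eq_zero_iff.1 hx.2
  rw [ae_restrict_iff' hs]
  filter_upwards [hcountable.ae_notMem volume] with x hx hxs hsin using hx ⟨hxs, hsin⟩

namespace IsPruferAngle

variable {ω α c d : ℝ} {b θ : ℝ → ℝ}

protected lemma mul_sub_lt_sub (hcd : c ≤ d) (hω : 0 < ω)
    (hb₀ : ∀ᵐ x ∂volume.restrict (Icc c d), 0 ≤ b x)
    (hbpos : ∃ᵐ x ∂volume.restrict (Icc c d), 0 < b x)
    (hθ : IsPruferAngle ω b θ c d) : ω * (d - c) < θ d - θ c := by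
  have hω_le : ∀ᵐ x ∂volume.restrict (Icc c d), ω ≤ ω + b x * sin (θ x) ^ 2 := by
    filter_upwards [hb₀] with x hx using le_add_of_nonneg_right (mul_nonneg hx (sq_nonneg _))
  have hmono : StrictMonoOn θ (Icc c d) := hθ.strictMonoOn (hω_le.mono fun _ ↦ hω.trans_le)
  refine HasACDeriv.mul_sub_lt_sub hcd hθ hω_le ?_
  refine (hbpos.and_eventually (ae_sin_ne_zero_of_injOn measurableSet_Icc hmono.injOn)).mono ?_
  exact fun x ⟨hbx, hsin⟩ ↦ lt_add_of_pos_right ω (by positivity)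

lemma mul_integral_pruferWeight_lt {N : ℕ} (hcd : c < d) (hω : 0 < ω) (hα : sin α ≠ 0)
    (hα_lt : sin α ^ 2 < 1) (hN : N ≠ 0) (hb : IntervalIntegrable b volume c d)
    (hb₀ : ∀ᵐ x ∂volume.restrict (Icc c d), 0 ≤ b x) (hθ : IsPruferAngle ω b θ c d)
    (hturns : θ c + N * π ≤ θ d) :
    N * ∫ t in (0 : ℝ)..π, pruferWeight α t <
      ω * (d - c) * (sin α ^ 2)⁻¹ + ∫ x in c..d, b x := by
  set W := pruferWeight α
  have hW : Continuous W := continuous_pruferWeight hα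
  have hθc : ContinuousOn θ (Icc c d) := uIcc_of_le hcd.le ▸ hθ.continuousOn
  have hWθ : IntervalIntegrable (fun x ↦ ω * W (θ x)) volume c d :=
    (continuousOn_const.mul (hW.comp_continuousOn hθc)).intervalIntegrable_of_Icc hcd.le
  have hWsin : IntervalIntegrable (fun x ↦ b x * (W (θ x) * sin (θ x) ^ 2)) volume c d :=
    hb.mul_continuousOn (by rw [uIcc_of_le hcd.le]; fun_prop)
  have hfree : ∫ x in c..d, W (θ x) < (d - c) * (sin α ^ 2)⁻¹ := by
    have hN₁ : (1 : ℝ) ≤ N := Nat.one_le_cast.2 hN.bot_lt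
    exact integral_pruferWeight_comp_lt hα hα_lt hcd hθc (by nlinarith [pi_pos])
  have hforced : ∫ x in c..d, b x * (W (θ x) * sin (θ x) ^ 2) ≤ ∫ x in c..d, b x := by
    refine intervalIntegral.integral_mono_ae_restrict hcd.le hWsin hb ?_
    filter_upwards [hb₀] with x hx
      using mul_le_of_le_one_right hx (pruferWeight_mul_sin_sq_le_one _)
  calc N * ∫ t in (0 : ℝ)..π, W t
    _ ≤ ∫ t in θ c..θ d, W t := nsmul_integral_le_integral_of_periodic periodic_pruferWeight
      (fun x y ↦ hW.intervalIntegrable x y) pruferWeight_nonneg N hturns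
    _ = ∫ x in c..d, W (θ x) * (ω + b x * sin (θ x) ^ 2) := (hθ.integral_comp_mul_deriv hW).symm
    _ = ∫ x in c..d, (ω * W (θ x) + b x * (W (θ x) * sin (θ x) ^ 2)) := by
      congr! 2
      ring
    _ = ω * (∫ x in c..d, W (θ x)) + ∫ x in c..d, b x * (W (θ x) * sin (θ x) ^ 2) := by
      rw [intervalIntegral.integral_add hWθ hWsin, intervalIntegral.integral_const_mul]
    _ < ω * ((d - c) * (sin α ^ 2)⁻¹) + ∫ x in c..d, b x :=
      add_lt_add_of_lt_of_le (mul_lt_mul_of_pos_left hfree hω) hforced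
    _ = ω * (d - c) * (sin α ^ 2)⁻¹ + ∫ x in c..d, b x := by rw [mul_assoc]

lemma two_mul_cot_lt_integral {m : ℕ} (hcd : c < d) (hm : m ≠ 0)
    (hω : ω * (d - c) = m * π) (hb : IntervalIntegrable b volume c d)
    (hb₀ : ∀ᵐ x ∂volume.restrict (Icc c d), 0 ≤ b x) (hθ : IsPruferAngle ω b θ c d)
    (hturns : θ c + (m + 2) * π ≤ θ d) :
    2 * (m + 2) * cot (m * π / (2 * (m + 2))) < ∫ x in c..d, b x := by
  have hω₀ : 0 < ω := pos_of_mul_pos_left (hω ▸ by positivity) (sub_pos.2 hcd).le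
  set α := m * π / (2 * (m + 2)) with hα_def
  have hα₀ : 0 < α := by positivity
  have hα_lt : α < π / 2 := by
    rw [hα_def, div_lt_div_iff₀ (by positivity) two_pos]
    nlinarith [pi_pos]
  have hsin : 0 < sin α := sin_pos_of_pos_of_lt_pi hα₀ (by linarith)
  have hsin_lt : sin α < 1 :=
    sin_pi_div_two ▸ sin_lt_sin_of_lt_of_le_pi_div_two (by linarith) le_rfl hα_lt
  have hcompare := hθ.mul_integral_pruferWeight_lt (N := m + 2) hcd hω₀ hsin.ne'
    (pow_lt_one₀ hsin.le hsin_lt two_ne_zero) (by positivity) hb hb₀ (by exact_mod_cast hturns)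
  -- `α` is chosen so that the terms containing `1 / sin²α` cancel.
  have hbalance : 2 * (m + 2) * α = m * π := mul_div_cancel₀ _ (by positivity)
  rw [integral_pruferWeight hα₀ hα_lt.le, hω, ← hbalance] at hcompare
  push_cast at hcompare
  linarith

end IsPruferAngle

lemma add_two_mul_pi_le_im_of_exp_eq {w z : ℂ} {m : ℕ}
    (h : Complex.exp w = (-1) ^ m * Complex.exp z) (hlt : z.im + m * π < w.im) :
    z.im + (m + 2) * π ≤ w.im := by
  rw [← Complex.exp_pi_mul_I, ← Complex.exp_nat_mul, ← Complex.exp_add,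
    Complex.exp_eq_exp_iff_exists_int] at h
  obtain ⟨k, rfl⟩ := h
  have him : (m * (π * Complex.I) + z + k * (2 * π * Complex.I)).im =
      m * π + z.im + k * (2 * π) := by
    simp
  rw [him] at hlt ⊢
  have hk : (0 : ℝ) < k := pos_of_mul_pos_left (by linarith) two_pi_pos.le
  have hk₁ : (1 : ℝ) ≤ k := by exact_mod_cast hk
  nlinarith [pi_pos]

lemma Prec.frequently_lt {T : ℝ} {f g : ℝ → ℝ} (h : Prec T f g) :
    ∃ᵐ x ∂volume.restrict (Icc 0 T), f x < g x := by
  rw [frequently_ae_iff, Measure.restrict_apply' measurableSet_Icc, inter_comm]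
  exact h.2.ne'

lemma AntiperiodicSol.eq_neg_one_pow_mul {T : ℝ} {m : ℕ} {a u v : ℝ → ℝ} (hm : Odd m)
    (h : AntiperiodicSol T a u v) : u T = (-1) ^ m * u 0 ∧ v T = (-1) ^ m * v 0 := by
  rw [hm.neg_one_pow, neg_one_mul, neg_one_mul]
  exact ⟨eq_neg_of_add_eq_zero_right h.2.1, eq_neg_of_add_eq_zero_right h.2.2⟩

lemma cast_two_mul_sub_one {n : ℕ} (hn : 1 ≤ n) : ((2 * n - 1 : ℕ) : ℝ) = 2 * n - 1 := by
  rw [Nat.cast_pred (by positivity), Nat.cast_mul, Nat.cast_two]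

lemma lamT_eq_sq (T : ℝ) {n : ℕ} (hn : 1 ≤ n) :
    lamT T n = ((2 * n - 1 : ℕ) * π / T) ^ 2 := by
  rw [lamT, cast_two_mul_sub_one hn]
  ring

lemma betaT1_eq (T : ℝ) {n : ℕ} (hn : 1 ≤ n) :
    betaT1 T n = 2 * π * (2 * n - 1 : ℕ) * ((2 * n - 1 : ℕ) + 2) / T *
      cot ((2 * n - 1 : ℕ) * π / (2 * ((2 * n - 1 : ℕ) + 2))) := by
  have hsucc : 2 * (n : ℝ) - 1 + 2 = 2 * n + 1 := by ring
  rw [betaT1, cast_two_mul_sub_one hn, hsucc]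

theorem stmt11_general (T : ℝ) (hT : 0 < T) (m : ℕ) (hm : m ≠ 0) (a : ℝ → ℝ)
    (ha : IntervalIntegrable a volume 0 T) (hprec : Prec T (fun _ ↦ (m * π / T) ^ 2) a)
    (hint : ∫ x in (0 : ℝ)..T, a x ≤
      T * (m * π / T) ^ 2 + 2 * π * m * (m + 2) / T * cot (m * π / (2 * (m + 2))))
    (u v : ℝ → ℝ) (hsol : IsSolOn a u v 0 T) (hu : u T = (-1) ^ m * u 0)
    (hv : v T = (-1) ^ m * v 0) : ∀ x ∈ Icc 0 T, u x = 0 := by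
  by_contra! hne
  set ω := m * π / T with hω_def
  have hω : 0 < ω := by positivity
  have hωT : ω * (T - 0) = m * π := by rw [hω_def, sub_zero, div_mul_cancel₀ _ hT.ne']
  have hb : IntervalIntegrable (fun x ↦ (a x - ω ^ 2) / ω) volume 0 T :=
    (ha.sub intervalIntegrable_const).div_const ω
  have hb₀ : ∀ᵐ x ∂volume.restrict (Icc 0 T), 0 ≤ (a x - ω ^ 2) / ω :=
    hprec.1.mono fun x hx ↦ div_nonneg (sub_nonneg.2 hx) hω.le
  have hbpos : ∃ᵐ x ∂volume.restrict (Icc 0 T), 0 < (a x - ω ^ 2) / ω :=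
    hprec.frequently_lt.mono fun x hx ↦ div_pos (sub_pos.2 hx) hω
  obtain ⟨L, hexp, hθ⟩ := hsol.exists_prufer_angle hω.ne' hT.le ha hne
  have hrise : ω * (T - 0) < (L T).im - (L 0).im := hθ.mul_sub_lt_sub hT.le hω hb₀ hbpos
  have hturns : (L 0).im + (m + 2) * π ≤ (L T).im := by
    refine add_two_mul_pi_le_im_of_exp_eq ?_ (by linarith)
    rw [← hexp 0 (left_mem_Icc.2 hT.le), ← hexp T (right_mem_Icc.2 hT.le)]
    exact_mod_cast phasePoint_eq_mul hu hv
  have hlt := hθ.two_mul_cot_lt_integral hT hm hωT hb hb₀ hturns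
  rw [intervalIntegral.integral_div, intervalIntegral.integral_sub ha intervalIntegrable_const,
    intervalIntegral.integral_const, smul_eq_mul, sub_zero, lt_div_iff₀ hω] at hlt
  refine hint.not_gt (lt_of_eq_of_lt ?_ (lt_sub_iff_add_lt'.1 hlt))
  rw [hω_def]
  ring

theorem stmt11 (T : ℝ) (hT : 0 < T) (n : ℕ) (hn : 1 ≤ n)
    (a : ℝ → ℝ) (hLT : MemLT T a)
    (hprec : Prec T (fun _ => lamT T n) a)
    (hnorm : (∫ x in (0:ℝ)..T, |a x|) ≤ T * lamT T n + betaT1 T n) :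
    ∀ u v : ℝ → ℝ, AntiperiodicSol T a u v → ∀ x ∈ Set.Icc 0 T, u x = 0 := by
  intro u v h
  have ha : IntervalIntegrable a volume 0 T :=
    (intervalIntegrable_iff_integrableOn_Icc_of_le hT.le).2 hLT.2.2
  have hint : ∫ x in (0 : ℝ)..T, a x ≤ ∫ x in (0 : ℝ)..T, |a x| :=
    intervalIntegral.integral_mono hT.le ha ha.abs fun x ↦ le_abs_self (a x)
  rw [lamT_eq_sq T hn] at hprec hnorm
  rw [betaT1_eq T hn] at hnorm
  have hbc := h.eq_neg_one_pow_mul (m := 2 * n - 1) (by grind)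
  exact stmt11_general T hT (2 * n - 1) (by omega) a ha hprec (hint.trans hnorm) u v h.1 hbc.1 hbc.2
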